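/- Let L, and for each layer ℓ ∈ {1,…,L}, dimensions d_out(ℓ), d_in(ℓ), r(ℓ) be positive integers, and let A_ℓ ∈ ℝ^{d_in(ℓ)×r(ℓ)} have orthonormal columns (A_ℓᵀA_ℓ = I). Then for each layer ℓ there exists a constant c_ℓ > 0, depending only on the dimensions {d_out(i), d_in(i), r(i)}, such that for every Lip ≥ 0, every differentiable f on the product parameter space with Lip-Lipschitz gradient, every point W, and every μ > 0: ‖∇_{W_ℓ} f_{μ,A}(W)·A_ℓA_ℓᵀ − ∇_{W_ℓ} f(W)·A_ℓA_ℓᵀ‖_F ≤ c_ℓ · Lip · μ. -/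

import Mathlib

/-!
Differentiating under the expectation gives `∇f_{μ,A}(W) = E[∇f(W + μΔ(R))]`: a Lipschitz gradient
makes `f` grow at most quadratically, and `Δ(R)`, being linear in the Gaussian `R`, has a second
moment. Hence the derivative moves by at most `Lip · μ · E‖Δ(R)‖` in operator norm, which dominates
the Frobenius norm of each gradient block, and `‖Δ(R)‖ ≤ ‖A‖ · ‖R‖` with `‖A_ℓ‖_F² = r(ℓ)`.
-/

open MeasureTheory ProbabilityTheory Matrix

attribute [local instance] Matrix.frobeniusNormedAddCommGroup Matrix.frobeniusNormedSpace
attribute [-instance] instTopologicalSpaceMatrix Matrix.instUniformSpace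

noncomputable section

/-- Entrywise expectation of a matrix-valued function. -/
def matExp {Ω : Type*} [MeasurableSpace Ω] (P : Measure Ω)
    {ι κ : Type*} (F : Ω → Matrix ι κ ℝ) : Matrix ι κ ℝ :=
  Matrix.of fun i j => ∫ ω, F ω i j ∂P

variable {L : ℕ} {dout din r : Fin L → ℕ}

/-- The block of the (Frobenius) gradient of `f` corresponding to layer `ℓ`:
its `(i,j)` entry is the partial derivative of `f` in the direction of the
standard basis matrix `E_{ij}` of layer `ℓ`. -/
def gradBlock (f : ((ℓ : Fin L) → Matrix (Fin (dout ℓ)) (Fin (din ℓ)) ℝ) → ℝ)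
    (W : (ℓ : Fin L) → Matrix (Fin (dout ℓ)) (Fin (din ℓ)) ℝ) (ℓ : Fin L) :
    Matrix (Fin (dout ℓ)) (Fin (din ℓ)) ℝ :=
  Matrix.of fun i j => fderiv ℝ f W (Pi.single ℓ (Matrix.single i j 1))

/-- The product of standard Gaussian measures over all entries of all blocks
`R_ℓ ∈ ℝ^{dout(ℓ) × r(ℓ)}` (i.i.d. standard Gaussian entries). -/
def gaussBlocks (dout r : Fin L → ℕ) :
    Measure ((ℓ : Fin L) → Fin (dout ℓ) → Fin (r ℓ) → ℝ) :=
  Measure.pi fun _ => Measure.pi fun _ => Measure.pi fun _ => gaussianReal 0 1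

/-- The AGZO perturbation `Δ(R) = (R₁A₁ᵀ, …, R_L A_Lᵀ)`. -/
def perturbA (A : (ℓ : Fin L) → Matrix (Fin (din ℓ)) (Fin (r ℓ)) ℝ)
    (R : (ℓ : Fin L) → Fin (dout ℓ) → Fin (r ℓ) → ℝ) :
    (ℓ : Fin L) → Matrix (Fin (dout ℓ)) (Fin (din ℓ)) ℝ :=
  fun ℓ => Matrix.of (R ℓ) * (A ℓ)ᵀ

/-- The subspace-smoothed objective `f_{μ,A}(W) = E_R[f(W + μΔ(R))]`. -/
def smoothedA (f : ((ℓ : Fin L) → Matrix (Fin (dout ℓ)) (Fin (din ℓ)) ℝ) → ℝ)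
    (μ : ℝ) (A : (ℓ : Fin L) → Matrix (Fin (din ℓ)) (Fin (r ℓ)) ℝ)
    (W : (ℓ : Fin L) → Matrix (Fin (dout ℓ)) (Fin (din ℓ)) ℝ) : ℝ :=
  ∫ R, f (W + μ • perturbA A R) ∂(gaussBlocks dout r)

open scoped NNReal ENNReal

section Smoothing

variable {E F Ω : Type*} [NormedAddCommGroup E] [NormedAddCommGroup F] [MeasurableSpace Ω]
  {P : Measure Ω} {T : Ω → E} {f : E → F} {K : ℝ≥0}

lemma integrable_comp_const_add_of_lipschitzWith [IsFiniteMeasure P] (hf : LipschitzWith K f)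
    (hT : Integrable T P) (x : E) : Integrable (fun ω => f (x + T ω)) P := by
  refine (hT.norm.const_mul (K : ℝ)).add (integrable_const ‖f x‖) |>.mono'
    (hf.continuous.comp_aestronglyMeasurable (hT.aestronglyMeasurable.const_add x))
    (.of_forall fun ω => ?_)
  calc ‖f (x + T ω)‖ ≤ ‖f (x + T ω) - f x‖ + ‖f x‖ := norm_le_norm_sub_add _ _
    _ ≤ K * ‖T ω‖ + ‖f x‖ := by
      gcongr
      simpa using hf.norm_sub_le (x + T ω) x

variable [NormedSpace ℝ F]

lemma norm_integral_comp_const_add_sub_le_of_lipschitzWith [CompleteSpace F]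
    [IsProbabilityMeasure P] (hf : LipschitzWith K f) (hT : Integrable T P) (x : E) :
    ‖∫ ω, f (x + T ω) ∂P - f x‖ ≤ K * ∫ ω, ‖T ω‖ ∂P := by
  have hsub : ∫ ω, f (x + T ω) ∂P - f x = ∫ ω, (f (x + T ω) - f x) ∂P := by
    rw [integral_sub (integrable_comp_const_add_of_lipschitzWith hf hT x) (integrable_const _)]
    simp
  rw [hsub, ← integral_const_mul]
  refine norm_integral_le_of_norm_le (hT.norm.const_mul _) (.of_forall fun ω => ?_)
  simpa using hf.norm_sub_le (x + T ω) x

variable [NormedSpace ℝ E]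

lemma norm_fderiv_le_of_lipschitzWith_fderiv (hf' : LipschitzWith K (fderiv ℝ f)) (x y : E) :
    ‖fderiv ℝ f y‖ ≤ ‖fderiv ℝ f x‖ + K * ‖y - x‖ :=
  (norm_le_norm_add_norm_sub' _ _).trans (by gcongr; exact hf'.norm_sub_le y x)

lemma norm_add_sub_le_of_lipschitzWith_fderiv (hf : Differentiable ℝ f)
    (hf' : LipschitzWith K (fderiv ℝ f)) (x v : E) :
    ‖f (x + v) - f x‖ ≤ ‖fderiv ℝ f x‖ * ‖v‖ + K * ‖v‖ ^ 2 := by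
  have hbound : ∀ y ∈ Metric.closedBall x ‖v‖, ‖fderiv ℝ f y‖ ≤ ‖fderiv ℝ f x‖ + K * ‖v‖ :=
    fun y hy => (norm_fderiv_le_of_lipschitzWith_fderiv hf' x y).trans <| by
      gcongr
      exact mem_closedBall_iff_norm.1 hy
  calc ‖f (x + v) - f x‖ ≤ (‖fderiv ℝ f x‖ + K * ‖v‖) * ‖x + v - x‖ :=
        (convex_closedBall x ‖v‖).norm_image_sub_le_of_norm_fderiv_le (fun y _ => hf y) hbound
          (by simp) (by simp)
    _ = ‖fderiv ℝ f x‖ * ‖v‖ + K * ‖v‖ ^ 2 := by rw [add_sub_cancel_left]; ring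

lemma integrable_comp_const_add_of_lipschitzWith_fderiv [IsFiniteMeasure P]
    (hf : Differentiable ℝ f) (hf' : LipschitzWith K (fderiv ℝ f)) (hT : MemLp T 2 P) (x : E) :
    Integrable (fun ω => f (x + T ω)) P := by
  have hT₁ : Integrable (fun ω => ‖T ω‖) P := (hT.integrable one_le_two).norm
  have hT₂ : Integrable (fun ω => ‖T ω‖ ^ 2) P := hT.norm.integrable_sq
  refine ((hT₁.const_mul ‖fderiv ℝ f x‖).add (hT₂.const_mul (K : ℝ))).add
    (integrable_const ‖f x‖) |>.mono'
    (hf.continuous.comp_aestronglyMeasurable (hT.aestronglyMeasurable.const_add x))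
    (.of_forall fun ω => ?_)
  exact (norm_le_norm_sub_add _ _).trans
    (add_le_add_left (norm_add_sub_le_of_lipschitzWith_fderiv hf hf' x (T ω)) _)

lemma hasFDerivAt_integral_comp_add_of_lipschitzWith_fderiv [IsFiniteMeasure P]
    (hf : Differentiable ℝ f) (hf' : LipschitzWith K (fderiv ℝ f)) (hT : MemLp T 2 P) (x : E) :
    HasFDerivAt (fun y => ∫ ω, f (y + T ω) ∂P) (∫ ω, fderiv ℝ f (x + T ω) ∂P) x := by
  have hT₁ : Integrable T P := hT.integrable one_le_two
  have hbound : ∀ ω, ∀ y ∈ Metric.ball x 1,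
      ‖fderiv ℝ f (y + T ω)‖ ≤ ‖fderiv ℝ f x‖ + K * (1 + ‖T ω‖) := fun ω y hy =>
    calc ‖fderiv ℝ f (y + T ω)‖ ≤ ‖fderiv ℝ f x‖ + K * ‖y + T ω - x‖ :=
          norm_fderiv_le_of_lipschitzWith_fderiv hf' x _
      _ ≤ ‖fderiv ℝ f x‖ + K * (‖y - x‖ + ‖T ω‖) := by
          gcongr
          rw [add_sub_right_comm]
          exact norm_add_le _ _
      _ ≤ ‖fderiv ℝ f x‖ + K * (1 + ‖T ω‖) := by
          gcongr
          exact (mem_ball_iff_norm.1 hy).le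
  exact hasFDerivAt_integral_of_dominated_of_fderiv_le (𝕜 := ℝ) (Metric.ball_mem_nhds x one_pos)
    (.of_forall fun y =>
      hf.continuous.comp_aestronglyMeasurable (hT.aestronglyMeasurable.const_add y))
    (integrable_comp_const_add_of_lipschitzWith_fderiv hf hf' hT x)
    (integrable_comp_const_add_of_lipschitzWith hf' hT₁ x).aestronglyMeasurable
    (.of_forall hbound)
    ((integrable_const _).add (((integrable_const _).add hT₁.norm).const_mul _))
    (.of_forall fun ω y _ => (hasFDerivAt_comp_add_right (T ω)).2 (hf _).hasFDerivAt)

theorem norm_fderiv_integral_comp_add_sub_le [CompleteSpace F] [IsProbabilityMeasure P]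
    (hf : Differentiable ℝ f) (hf' : LipschitzWith K (fderiv ℝ f)) (hT : MemLp T 2 P) (x : E) :
    ‖fderiv ℝ (fun y => ∫ ω, f (y + T ω) ∂P) x - fderiv ℝ f x‖ ≤ K * ∫ ω, ‖T ω‖ ∂P := by
  rw [(hasFDerivAt_integral_comp_add_of_lipschitzWith_fderiv hf hf' hT x).fderiv]
  exact norm_integral_comp_const_add_sub_le_of_lipschitzWith hf' (hT.integrable one_le_two) x

end Smoothing

lemma norm_comp_single_le {𝕜 ι F : Type*} {G : ι → Type*} [NontriviallyNormedField 𝕜] [Fintype ι]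
    [DecidableEq ι] [∀ i, NormedAddCommGroup (G i)] [∀ i, NormedSpace 𝕜 (G i)]
    [NormedAddCommGroup F] [NormedSpace 𝕜 F] (φ : ((i : ι) → G i) →L[𝕜] F) (i : ι) :
    ‖φ ∘L ContinuousLinearMap.single 𝕜 G i‖ ≤ ‖φ‖ :=
  ContinuousLinearMap.opNorm_le_bound _ (norm_nonneg φ) fun x => by
    simpa only [Pi.norm_single] using! φ.le_opNorm (Pi.single i x)

section Frobenius

variable {m n : Type*} [Fintype m] [Fintype n]

lemma frobenius_norm_sq {α : Type*} [NormedAddCommGroup α] (M : Matrix m n α) :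
    ‖M‖ ^ 2 = ∑ i, ∑ j, ‖M i j‖ ^ 2 := by
  rw [Matrix.frobenius_norm_def, ← Real.sqrt_eq_rpow, Real.sq_sqrt (by positivity)]
  simp

lemma frobenius_norm_sq_of_transpose_mul_self_eq_one [DecidableEq n] {M : Matrix m n ℝ}
    (hM : Mᵀ * M = 1) : ‖M‖ ^ 2 = Fintype.card n :=
  calc ‖M‖ ^ 2 = (Mᵀ * M).trace := by
        rw [frobenius_norm_sq, Finset.sum_comm]
        simp [Matrix.trace, Matrix.mul_apply, sq]
    _ = Fintype.card n := by rw [hM, Matrix.trace_one]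

lemma frobenius_norm_of_apply_single_le [DecidableEq m] [DecidableEq n]
    (φ : Matrix m n ℝ →L[ℝ] ℝ) :
    ‖Matrix.of fun i j => φ (Matrix.single i j 1)‖ ≤ ‖φ‖ := by
  set G : Matrix m n ℝ := Matrix.of fun i j => φ (Matrix.single i j 1) with hG
  have hφG : φ G = ‖G‖ ^ 2 := by
    conv_lhs => rw [Matrix.matrix_eq_sum_single G]
    rw [frobenius_norm_sq, map_sum]
    refine Finset.sum_congr rfl fun i _ => ?_
    rw [map_sum]
    refine Finset.sum_congr rfl fun j _ => ?_
    rw [← mul_one (G i j), ← smul_eq_mul, ← Matrix.smul_single, map_smul]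
    simp [hG, sq]
  rcases (norm_nonneg G).eq_or_lt with h0 | hpos
  · rw [← h0]
    positivity
  · refine le_of_mul_le_mul_right ?_ hpos
    calc ‖G‖ * ‖G‖ = φ G := by rw [hφG, sq]
      _ ≤ ‖φ‖ * ‖G‖ := (le_abs_self _).trans (φ.le_opNorm G)

end Frobenius

lemma norm_gradBlock_sub_le (f g : ((ℓ : Fin L) → Matrix (Fin (dout ℓ)) (Fin (din ℓ)) ℝ) → ℝ)
    (W : (ℓ : Fin L) → Matrix (Fin (dout ℓ)) (Fin (din ℓ)) ℝ) (ℓ : Fin L) :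
    ‖gradBlock f W ℓ - gradBlock g W ℓ‖ ≤ ‖fderiv ℝ f W - fderiv ℝ g W‖ := by
  let φ := fderiv ℝ f W - fderiv ℝ g W
  let φℓ := φ ∘L ContinuousLinearMap.single ℝ (fun ℓ => Matrix (Fin (dout ℓ)) (Fin (din ℓ)) ℝ) ℓ
  have hφℓ : gradBlock f W ℓ - gradBlock g W ℓ =
      Matrix.of fun i j => φℓ (Matrix.single i j 1) := by
    ext i j
    rfl
  rw [hφℓ]
  exact (frobenius_norm_of_apply_single_le φℓ).trans (norm_comp_single_le φ ℓ)

lemma memLp_id_pi {ι : Type*} [Fintype ι] {E : ι → Type*} [∀ i, NormedAddCommGroup (E i)]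
    [∀ i, MeasurableSpace (E i)] {ν : ∀ i, Measure (E i)} [∀ i, IsProbabilityMeasure (ν i)]
    {p : ℝ≥0∞} (hν : ∀ i, MemLp id p (ν i)) : MemLp id p (Measure.pi ν) :=
  .of_eval fun i => (hν i).comp_measurePreserving (measurePreserving_eval ν i)

instance isProbabilityMeasure_gaussBlocks : IsProbabilityMeasure (gaussBlocks dout r) := by
  unfold gaussBlocks
  infer_instance

lemma memLp_linearMap_gaussBlocks {E : Type*} [NormedAddCommGroup E] [NormedSpace ℝ E]
    (T : ((ℓ : Fin L) → Fin (dout ℓ) → Fin (r ℓ) → ℝ) →ₗ[ℝ] E) {p : ℝ≥0∞} (hp : p ≠ ∞) :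
    MemLp T p (gaussBlocks dout r) :=
  T.toContinuousLinearMap.comp_memLp' <|
    memLp_id_pi fun _ => memLp_id_pi fun _ => memLp_id_pi fun _ => memLp_id_gaussianReal' p hp

lemma isLinearMap_perturbA (A : (ℓ : Fin L) → Matrix (Fin (din ℓ)) (Fin (r ℓ)) ℝ) :
    IsLinearMap ℝ (perturbA (dout := dout) A) where
  map_add R S := funext fun ℓ => Matrix.add_mul (Matrix.of (R ℓ)) (Matrix.of (S ℓ)) _
  map_smul c R := funext fun ℓ => Matrix.smul_mul c (Matrix.of (R ℓ)) _

lemma norm_perturbA_le (A : (ℓ : Fin L) → Matrix (Fin (din ℓ)) (Fin (r ℓ)) ℝ)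
    (R : (ℓ : Fin L) → Fin (dout ℓ) → Fin (r ℓ) → ℝ) :
    ‖perturbA A R‖ ≤ ‖A‖ * ‖fun ℓ => Matrix.of (R ℓ)‖ := by
  refine (pi_norm_le_iff_of_nonneg (by positivity)).2 fun ℓ => ?_
  calc ‖Matrix.of (R ℓ) * (A ℓ)ᵀ‖ ≤ ‖Matrix.of (R ℓ)‖ * ‖(A ℓ)ᵀ‖ := Matrix.frobenius_norm_mul _ _
    _ = ‖A ℓ‖ * ‖Matrix.of (R ℓ)‖ := by rw [Matrix.frobenius_norm_transpose, mul_comm]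
    _ ≤ ‖A‖ * ‖fun ℓ => Matrix.of (R ℓ)‖ := by
      gcongr
      · exact norm_le_pi_norm A ℓ
      · exact norm_le_pi_norm (fun ℓ => Matrix.of (R ℓ)) ℓ

/-- The expected norm `E‖R‖` of the Gaussian blocks, where `‖R‖` is the maximum over the layers of
the Frobenius norms `‖R_ℓ‖_F`. It is the only moment of `R` entering the bias bound. -/
def gaussBlocksMeanNorm (dout r : Fin L → ℕ) : ℝ :=
  ∫ R, ‖fun ℓ => Matrix.of (R ℓ)‖ ∂gaussBlocks dout r

lemma gaussBlocksMeanNorm_nonneg (dout r : Fin L → ℕ) : 0 ≤ gaussBlocksMeanNorm dout r :=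
  integral_nonneg fun _ => norm_nonneg _

lemma integral_norm_perturbA_le (A : (ℓ : Fin L) → Matrix (Fin (din ℓ)) (Fin (r ℓ)) ℝ) :
    ∫ R, ‖perturbA A R‖ ∂gaussBlocks dout r ≤ ‖A‖ * gaussBlocksMeanNorm dout r := by
  let blocks : ((ℓ : Fin L) → Fin (dout ℓ) → Fin (r ℓ) → ℝ) →ₗ[ℝ]
      ((ℓ : Fin L) → Matrix (Fin (dout ℓ)) (Fin (r ℓ)) ℝ) :=
    { toFun R ℓ := Matrix.of (R ℓ), map_add' _ _ := rfl, map_smul' _ _ := rfl }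
  have hblocks : Integrable blocks (gaussBlocks dout r) :=
    memLp_one_iff_integrable.1 (memLp_linearMap_gaussBlocks blocks ENNReal.one_ne_top)
  rw [gaussBlocksMeanNorm, ← integral_const_mul]
  exact integral_mono_of_nonneg (.of_forall fun _ => norm_nonneg _) (hblocks.norm.const_mul _)
    (.of_forall (norm_perturbA_le A))

section Bias

variable {f : ((ℓ : Fin L) → Matrix (Fin (dout ℓ)) (Fin (din ℓ)) ℝ) → ℝ} {K : ℝ≥0}

lemma norm_fderiv_smoothedA_sub_le (hf : Differentiable ℝ f) (hf' : LipschitzWith K (fderiv ℝ f))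
    (A : (ℓ : Fin L) → Matrix (Fin (din ℓ)) (Fin (r ℓ)) ℝ)
    (W : (ℓ : Fin L) → Matrix (Fin (dout ℓ)) (Fin (din ℓ)) ℝ) (μ : ℝ) :
    ‖fderiv ℝ (smoothedA f μ A) W - fderiv ℝ f W‖
      ≤ gaussBlocksMeanNorm dout r * ‖A‖ * K * |μ| := by
  have hΔ : MemLp (fun R => μ • perturbA A R) 2 (gaussBlocks dout r) :=
    (memLp_linearMap_gaussBlocks (isLinearMap_perturbA A).mk' ENNReal.ofNat_ne_top).const_smul μ
  calc ‖fderiv ℝ (smoothedA f μ A) W - fderiv ℝ f W‖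
      ≤ K * ∫ R, ‖μ • perturbA A R‖ ∂gaussBlocks dout r :=
        norm_fderiv_integral_comp_add_sub_le hf hf' hΔ W
    _ = K * (|μ| * ∫ R, ‖perturbA A R‖ ∂gaussBlocks dout r) := by
        simp_rw [norm_smul, Real.norm_eq_abs, integral_const_mul]
    _ ≤ K * (|μ| * (‖A‖ * gaussBlocksMeanNorm dout r)) := by
        gcongr
        exact integral_norm_perturbA_le A
    _ = gaussBlocksMeanNorm dout r * ‖A‖ * K * |μ| := by ring

theorem agzo_smoothing_bias_general (hf : Differentiable ℝ f) (hf' : LipschitzWith K (fderiv ℝ f))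
    (A : (ℓ : Fin L) → Matrix (Fin (din ℓ)) (Fin (r ℓ)) ℝ)
    (W : (ℓ : Fin L) → Matrix (Fin (dout ℓ)) (Fin (din ℓ)) ℝ) (μ : ℝ) (ℓ : Fin L) :
    ‖gradBlock (smoothedA f μ A) W ℓ * (A ℓ * (A ℓ)ᵀ) - gradBlock f W ℓ * (A ℓ * (A ℓ)ᵀ)‖
      ≤ gaussBlocksMeanNorm dout r * ‖A‖ * ‖A ℓ‖ ^ 2 * K * |μ| := by
  have hAA : ‖A ℓ * (A ℓ)ᵀ‖ ≤ ‖A ℓ‖ ^ 2 := by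
    simpa only [Matrix.frobenius_norm_transpose, ← sq] using
      Matrix.frobenius_norm_mul (A ℓ) (A ℓ)ᵀ
  have hfderiv := norm_fderiv_smoothedA_sub_le hf hf' A W μ
  rw [← Matrix.sub_mul]
  calc ‖(gradBlock (smoothedA f μ A) W ℓ - gradBlock f W ℓ) * (A ℓ * (A ℓ)ᵀ)‖
      ≤ ‖gradBlock (smoothedA f μ A) W ℓ - gradBlock f W ℓ‖ * ‖A ℓ * (A ℓ)ᵀ‖ :=
        Matrix.frobenius_norm_mul _ _
    _ ≤ (gaussBlocksMeanNorm dout r * ‖A‖ * K * |μ|) * ‖A ℓ‖ ^ 2 :=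
        mul_le_mul ((norm_gradBlock_sub_le _ _ W ℓ).trans hfderiv) hAA (norm_nonneg _)
          ((norm_nonneg _).trans hfderiv)
    _ = gaussBlocksMeanNorm dout r * ‖A‖ * ‖A ℓ‖ ^ 2 * K * |μ| := by ring

end Bias

lemma norm_le_sqrt_sum_of_transpose_mul_self_eq_one
    {A : (ℓ : Fin L) → Matrix (Fin (din ℓ)) (Fin (r ℓ)) ℝ} (hA : ∀ ℓ, (A ℓ)ᵀ * A ℓ = 1) :
    ‖A‖ ≤ √(∑ ℓ, (r ℓ : ℝ)) := by
  refine (pi_norm_le_iff_of_nonneg (Real.sqrt_nonneg _)).2 fun ℓ => Real.le_sqrt_of_sq_le ?_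
  rw [frobenius_norm_sq_of_transpose_mul_self_eq_one (hA ℓ), Fintype.card_fin]
  exact Finset.single_le_sum (f := fun ℓ => (r ℓ : ℝ)) (fun _ _ => Nat.cast_nonneg _)
    (Finset.mem_univ ℓ)

/-- for each layer `ℓ` there is a constant `c_ℓ > 0` depending only on the
dimensions such that for every orthonormal collection `A`, every `Lip ≥ 0`, every
differentiable `f` with `Lip`-Lipschitz gradient, every `W` and every `μ > 0`,
`‖∇_{W_ℓ} f_{μ,A}(W)·A_ℓA_ℓᵀ − ∇_{W_ℓ} f(W)·A_ℓA_ℓᵀ‖_F ≤ c_ℓ·Lip·μ`. -/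
theorem agzo_smoothing_bias
    (L : ℕ) (hL : 0 < L) (dout din r : Fin L → ℕ)
    (hdout : ∀ ℓ, 0 < dout ℓ) (hdin : ∀ ℓ, 0 < din ℓ) (hr : ∀ ℓ, 0 < r ℓ)
    (ℓ : Fin L) :
    ∃ c : ℝ, 0 < c ∧
      ∀ (A : (ℓ' : Fin L) → Matrix (Fin (din ℓ')) (Fin (r ℓ')) ℝ),
        (∀ ℓ', (A ℓ')ᵀ * A ℓ' = 1) →
      ∀ (Lip : ℝ), 0 ≤ Lip →
      ∀ (f : ((ℓ' : Fin L) → Matrix (Fin (dout ℓ')) (Fin (din ℓ')) ℝ) → ℝ),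
        Differentiable ℝ f →
        (∀ W W', ‖fderiv ℝ f W - fderiv ℝ f W'‖ ≤ Lip * ‖W - W'‖) →
      ∀ (W : (ℓ' : Fin L) → Matrix (Fin (dout ℓ')) (Fin (din ℓ')) ℝ),
      ∀ (μ : ℝ), 0 < μ →
        ‖gradBlock (smoothedA f μ A) W ℓ * (A ℓ * (A ℓ)ᵀ)
          - gradBlock f W ℓ * (A ℓ * (A ℓ)ᵀ)‖ ≤ c * Lip * μ := by
  have hM : 0 ≤ gaussBlocksMeanNorm dout r := gaussBlocksMeanNorm_nonneg dout r
  refine ⟨gaussBlocksMeanNorm dout r * √(∑ i, (r i : ℝ)) * r ℓ + 1, by positivity,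
    fun A hA Lip hLip f hf hf' W μ hμ => ?_⟩
  lift Lip to ℝ≥0 using hLip
  have hAℓ : ‖A ℓ‖ ^ 2 = r ℓ := by
    simpa using frobenius_norm_sq_of_transpose_mul_self_eq_one (hA ℓ)
  have hLip : LipschitzWith Lip (fderiv ℝ f) := .of_dist_le_mul fun x y => by
    simpa only [dist_eq_norm] using hf' x y
  calc _ ≤ gaussBlocksMeanNorm dout r * ‖A‖ * ‖A ℓ‖ ^ 2 * Lip * |μ| :=
        agzo_smoothing_bias_general hf hLip A W μ ℓ
    _ ≤ gaussBlocksMeanNorm dout r * √(∑ i, (r i : ℝ)) * r ℓ * Lip * μ := by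
        rw [hAℓ, abs_of_pos hμ]
        gcongr
        exact norm_le_sqrt_sum_of_transpose_mul_self_eq_one hA
    _ ≤ (gaussBlocksMeanNorm dout r * √(∑ i, (r i : ℝ)) * r ℓ + 1) * Lip * μ := by
        gcongr
        exact le_add_of_nonneg_right zero_le_one

end
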